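/- arXiv:1410.7138 — 3 statements merged into one kernel-verified Lean document; each statement's English description precedes it below -/
import Mathlib

section
/- Let G be a group and a₁, a₂, a₃, a₄, a₅, b ∈ G elements satisfying: a_i² = b² = 1 for all i; (a_i a_j)² = 1 whenever |i − j| > 1; a_i a_{i+1} a_i = a_{i+1} a_i a_{i+1} for i = 1, …, 4; (a_i b)² = 1 for i ∈ {1, 2, 3, 5}; and a₄ b a₄ = b a₄ b. Then b (a₁ a₂ a₃ a₄ a₅ b) = (a₁ a₂ a₃ a₄ a₅ b) a₄ a₅ a₄. -/
/-!
The involution `b` commutes with `a1`, `a2`, `a3` and `a5`, so the left side is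
`a1 a2 a3 (b a4 b) a5`, and the braid relation between `a4` and `b` turns this into
`a1 a2 a3 a4 b a4 a5`. On the right side, moving `a5` past `b` and using
`a5 (a4 a5 a4) = a5 (a5 a4 a5) = a4 a5` gives the same word.
-/

/-- relation (b) in the proof of Claim 3.3:
`b(a₁a₂a₃a₄a₅b) = (a₁a₂a₃a₄a₅b)a₄a₅a₄`. -/
theorem stmt_14 {G : Type*} [Group G] (a1 a2 a3 a4 a5 b : G)
    (ha1 : a1 ^ 2 = 1) (ha2 : a2 ^ 2 = 1) (ha3 : a3 ^ 2 = 1) (ha4 : a4 ^ 2 = 1)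
    (ha5 : a5 ^ 2 = 1) (hb : b ^ 2 = 1)
    (h13 : (a1 * a3) ^ 2 = 1) (h14 : (a1 * a4) ^ 2 = 1) (h15 : (a1 * a5) ^ 2 = 1)
    (h24 : (a2 * a4) ^ 2 = 1) (h25 : (a2 * a5) ^ 2 = 1) (h35 : (a3 * a5) ^ 2 = 1)
    (hbr1 : a1 * a2 * a1 = a2 * a1 * a2) (hbr2 : a2 * a3 * a2 = a3 * a2 * a3)
    (hbr3 : a3 * a4 * a3 = a4 * a3 * a4) (hbr4 : a4 * a5 * a4 = a5 * a4 * a5)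
    (hb1 : (a1 * b) ^ 2 = 1) (hb2 : (a2 * b) ^ 2 = 1) (hb3 : (a3 * b) ^ 2 = 1)
    (hb5 : (a5 * b) ^ 2 = 1)
    (hb4 : a4 * b * a4 = b * a4 * b) :
    b * (a1 * a2 * a3 * a4 * a5 * b) = (a1 * a2 * a3 * a4 * a5 * b) * a4 * a5 * a4 := by
  -- Two involutions whose product squares to `1` commute.
  have comm : ∀ x y : G, x ^ 2 = 1 → y ^ 2 = 1 → (x * y) ^ 2 = 1 → y * x = x * y := by
    intro x y hx hy hxy
    rw [sq, mul_eq_one_iff_eq_inv] at hx hy hxy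
    rw [hxy, mul_inv_rev, ← hx, ← hy]
  have c1 := comm a1 b ha1 hb hb1
  have c2 := comm a2 b ha2 hb hb2
  have c3 := comm a3 b ha3 hb hb3
  have c5 := comm a5 b ha5 hb hb5
  -- Both sides equal `a1 * a2 * a3 * (a4 * b * a4 * a5)`.
  calc b * (a1 * a2 * a3 * a4 * a5 * b)
      = (b * a1) * a2 * a3 * a4 * (a5 * b) := by group
    _ = a1 * (b * a2) * a3 * a4 * (b * a5) := by rw [c1, c5]; group
    _ = a1 * a2 * (b * a3) * a4 * b * a5 := by rw [c2]; group
    _ = a1 * a2 * a3 * (b * a4 * b) * a5 := by rw [c3]; group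
    _ = a1 * a2 * a3 * a4 * b * (a5 ^ 2) * a4 * a5 := by rw [← hb4, ha5]; group
    _ = a1 * a2 * a3 * a4 * (b * a5) * (a5 * a4 * a5) := by simp only [sq, mul_assoc]
    _ = (a1 * a2 * a3 * a4 * a5 * b) * a4 * a5 * a4 := by
      rw [c5, ← hbr4]; simp only [mul_assoc]
end

section
/- Let G be a group and a₁, a₂, a₃, a₄, a₅, b ∈ G elements satisfying: a_i² = b² = 1 for all i; (a_i a_j)² = 1 whenever |i − j| > 1; a_i a_{i+1} a_i = a_{i+1} a_i a_{i+1} for i = 1, …, 4; (a_i b)² = 1 for i ∈ {1, 2, 3, 5}; and a₄ b a₄ = b a₄ b. Then a₅ (a₁ a₂ a₃ a₄ a₅ b) = (a₁ a₂ a₃ a₄ a₅ b) a₄ b a₄. -/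
/-- Two involutions whose product squares to the identity commute. -/
lemma commute_of_sq_eq_one {G : Type*} [Group G] {x y : G} (hx : x ^ 2 = 1) (hy : y ^ 2 = 1)
    (hxy : (x * y) ^ 2 = 1) : y * x = x * y := by
  have hx' : x⁻¹ = x := inv_eq_of_mul_eq_one_left (by rw [← sq, hx])
  have hy' : y⁻¹ = y := inv_eq_of_mul_eq_one_left (by rw [← sq, hy])
  have h : (x * y)⁻¹ = x * y := inv_eq_of_mul_eq_one_left (by rw [← sq, hxy])
  rwa [mul_inv_rev, hx', hy'] at h

/-- relation (c) in the proof of Claim 3.3: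
`a₅(a₁a₂a₃a₄a₅b) = (a₁a₂a₃a₄a₅b)a₄ba₄`. -/
theorem stmt_15 {G : Type*} [Group G] (a1 a2 a3 a4 a5 b : G)
    (ha1 : a1 ^ 2 = 1) (ha2 : a2 ^ 2 = 1) (ha3 : a3 ^ 2 = 1) (ha4 : a4 ^ 2 = 1)
    (ha5 : a5 ^ 2 = 1) (hb : b ^ 2 = 1)
    (h13 : (a1 * a3) ^ 2 = 1) (h14 : (a1 * a4) ^ 2 = 1) (h15 : (a1 * a5) ^ 2 = 1)
    (h24 : (a2 * a4) ^ 2 = 1) (h25 : (a2 * a5) ^ 2 = 1) (h35 : (a3 * a5) ^ 2 = 1)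
    (hbr1 : a1 * a2 * a1 = a2 * a1 * a2) (hbr2 : a2 * a3 * a2 = a3 * a2 * a3)
    (hbr3 : a3 * a4 * a3 = a4 * a3 * a4) (hbr4 : a4 * a5 * a4 = a5 * a4 * a5)
    (hb1 : (a1 * b) ^ 2 = 1) (hb2 : (a2 * b) ^ 2 = 1) (hb3 : (a3 * b) ^ 2 = 1)
    (hb5 : (a5 * b) ^ 2 = 1)
    (hb4 : a4 * b * a4 = b * a4 * b) :
    a5 * (a1 * a2 * a3 * a4 * a5 * b) = (a1 * a2 * a3 * a4 * a5 * b) * a4 * b * a4 := by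
  have c1 := commute_of_sq_eq_one ha1 ha5 h15
  have c2 := commute_of_sq_eq_one ha2 ha5 h25
  have c3 := commute_of_sq_eq_one ha3 ha5 h35
  have hbb : b * b = 1 := by rw [← sq, hb]
  -- Both sides equal `a1 * a2 * a3 * (a4 * a5 * a4) * b`: on the left `a5` moves past
  -- `a1, a2, a3` and the braid relation of `a4, a5` applies; on the right the braid relation
  -- of `a4, b` produces a factor `b * b`.
  calc a5 * (a1 * a2 * a3 * a4 * a5 * b)
      = (a5 * a1) * a2 * a3 * a4 * a5 * b := by group
    _ = a1 * (a5 * a2) * a3 * a4 * a5 * b := by rw [c1]; group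
    _ = a1 * a2 * (a5 * a3) * a4 * a5 * b := by rw [c2]; group
    _ = a1 * a2 * a3 * (a5 * a4 * a5) * b := by rw [c3]; group
    _ = a1 * a2 * a3 * a4 * a5 * 1 * a4 * b := by rw [← hbr4]; group
    _ = a1 * a2 * a3 * a4 * a5 * b * (b * a4 * b) := by rw [← hbb]; simp only [mul_assoc]
    _ = (a1 * a2 * a3 * a4 * a5 * b) * a4 * b * a4 := by rw [← hb4]; simp only [mul_assoc]
end

section
/- Let g ≥ 5 and let F be the free group on generators a₀, a₁, …, a_{g−1}. For every i with 1 ≤ i ≤ g−1, the element a_i² lies in the normal closure in F of the set consisting of a₀² together with the braid relators a_j a_{j+1} a_j (a_{j+1} a_j a_{j+1})⁻¹ for j = 1, …, g−2 and a₀ a₄ a₀ (a₄ a₀ a₄)⁻¹. -/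
/-!
Elements satisfying a braid relation are conjugate, hence so are their squares
(`sq_mem_iff_of_braid`). The braid relators link `a₀` to `a₄`, and `a₄` to every other `aᵢ`
along the chain `a₁, …, a_{g-1}`, so killing `a₀²` kills every `aᵢ²`.
-/

/-- The generator `aᵢ` of the free group on `Fin g` (and `1` if `i` is out of range). -/
def gen (g i : ℕ) : FreeGroup (Fin g) :=
  if h : i < g then FreeGroup.of ⟨i, h⟩ else 1

/-- The braid relation `xyx = yxy` says `(xy) x (xy)⁻¹ = y`, so modulo `N` the elements `x ^ 2` and
`y ^ 2` are conjugate. -/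
lemma sq_mem_iff_of_braid {G : Type*} [Group G] (N : Subgroup G) [N.Normal] {x y : G}
    (h : x * y * x * (y * x * y)⁻¹ ∈ N) : x ^ 2 ∈ N ↔ y ^ 2 ∈ N := by
  rw [← QuotientGroup.eq_one_iff] at h
  rw [← QuotientGroup.eq_one_iff (x ^ 2), ← QuotientGroup.eq_one_iff (y ^ 2)]
  simp only [QuotientGroup.mk_mul, QuotientGroup.mk_inv, QuotientGroup.mk_pow] at h ⊢
  generalize (x : G ⧸ N) = a at *
  generalize (y : G ⧸ N) = b at *
  have hb : b = (a * b) * a * (a * b)⁻¹ := by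
    rw [mul_inv_eq_one.mp h]
    group
  have hb2 : b ^ 2 = (a * b) * a ^ 2 * (a * b)⁻¹ := by
    rw [← conj_pow, ← hb]
  rw [hb2, conj_eq_one_iff]

/-- Lemma 4.2: for `g ≥ 5` and `1 ≤ i ≤ g − 1`, the element `aᵢ²` lies in the
normal closure in the free group on `a₀, a₁, …, a_{g−1}` of the set consisting of `a₀²`
together with the braid relators `aⱼa_{j+1}aⱼ(a_{j+1}aⱼa_{j+1})⁻¹` for `j = 1, …, g−2` and
`a₀a₄a₀(a₄a₀a₄)⁻¹`. -/
theorem stmt_16 (g : ℕ) (hg : 5 ≤ g) (i : ℕ) (hi1 : 1 ≤ i) (hig : i < g) :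
    gen g i ^ 2 ∈ Subgroup.normalClosure
      ({gen g 0 ^ 2} ∪
        {r | ∃ j, 1 ≤ j ∧ j + 1 < g ∧
          r = gen g j * gen g (j + 1) * gen g j *
            (gen g (j + 1) * gen g j * gen g (j + 1))⁻¹} ∪
        {gen g 0 * gen g 4 * gen g 0 * (gen g 4 * gen g 0 * gen g 4)⁻¹}) := by
  set N := Subgroup.normalClosure
      ({gen g 0 ^ 2} ∪
        {r | ∃ j, 1 ≤ j ∧ j + 1 < g ∧
          r = gen g j * gen g (j + 1) * gen g j *
            (gen g (j + 1) * gen g j * gen g (j + 1))⁻¹} ∪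
        {gen g 0 * gen g 4 * gen g 0 * (gen g 4 * gen g 0 * gen g 4)⁻¹}) with hN
  have h0 : gen g 0 ^ 2 ∈ N := Subgroup.subset_normalClosure (Or.inl (Or.inl rfl))
  have h4 : gen g 4 ^ 2 ∈ N :=
    (sq_mem_iff_of_braid N (Subgroup.subset_normalClosure (Or.inr rfl))).mp h0
  have hstep : ∀ j, 1 ≤ j → j + 1 < g → (gen g j ^ 2 ∈ N ↔ gen g (j + 1) ^ 2 ∈ N) :=
    fun j h1 h2 => sq_mem_iff_of_braid N
      (Subgroup.subset_normalClosure (Or.inl (Or.inr ⟨j, h1, h2, rfl⟩)))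
  -- Along the chain `a₁, …, a_{g-1}` all the squares lie in `N` or none does; `a₄` decides.
  have hchain : ∀ j, 1 ≤ j → j < g → (gen g 1 ^ 2 ∈ N ↔ gen g j ^ 2 ∈ N) := by
    intro j h1
    induction j, h1 using Nat.le_induction with
    | base => exact fun _ => Iff.rfl
    | succ j h1 ih => exact fun h2 => (ih (by omega)).trans (hstep j h1 h2)
  exact (hchain i hi1 hig).mp ((hchain 4 (by omega) (by omega)).mpr h4)
end
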